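/- arXiv:2005.04843 — 3 statements merged into one kernel-verified Lean document; each statement's English description precedes it below -/
import Mathlib

section
/- If G and G' are connected bipartite simple graphs, each having at least one edge, and their line graphs L(G) and L(G') are isomorphic, then G and G' are isomorphic; that is, the exceptional pair in Whitney's isomorphism theorem (K_3 and K_{1,3}) never occurs when both graphs are bipartite. -/
theorem wb_build {α β E : Type*} (G : SimpleGraph α) (G' : SimpleGraph β)
    (l r : E → α) (l' r' : E → β)
    (hl : ∀ e f, l e = l f ↔ l' e = l' f) (hr : ∀ e f, r e = r f ↔ r' e = r' f)
    (hlr : ∀ e f, l e ≠ r f) (hlr' : ∀ e f, l' e ≠ r' f)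
    (hs : ∀ v, ∃ e, v = l e ∨ v = r e) (hs' : ∀ v, ∃ e, v = l' e ∨ v = r' e)
    (ha : ∀ v w, G.Adj v w ↔ ∃ e, (v = l e ∧ w = r e) ∨ (v = r e ∧ w = l e))
    (ha' : ∀ v w, G'.Adj v w ↔ ∃ e, (v = l' e ∧ w = r' e) ∨ (v = r' e ∧ w = l' e)) :
    Nonempty (G ≃g G') := by
  have h1 : ∀ v, ∃ w, ∃ e, (v = l e ∧ w = l' e) ∨ (v = r e ∧ w = r' e) := by
    intro v
    obtain ⟨e, h | h⟩ := hs v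
    · exact ⟨l' e, e, Or.inl ⟨h, rfl⟩⟩
    · exact ⟨r' e, e, Or.inr ⟨h, rfl⟩⟩
  choose F hF using h1
  have hFl : ∀ e, F (l e) = l' e := by
    intro e
    obtain ⟨f, ⟨h, h'⟩ | ⟨h, h'⟩⟩ := hF (l e)
    · rw [h']; exact ((hl e f).1 h).symm
    · exact absurd h (hlr _ _)
  have hFr : ∀ e, F (r e) = r' e := by
    intro e
    obtain ⟨f, ⟨h, h'⟩ | ⟨h, h'⟩⟩ := hF (r e)
    · exact absurd h.symm (hlr _ _)
    · rw [h']; exact ((hr e f).1 h).symm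
  have hinj : Function.Injective F := by
    intro v w h
    obtain ⟨e, rfl | rfl⟩ := hs v <;> obtain ⟨f, rfl | rfl⟩ := hs w <;>
      simp only [hFl, hFr] at h
    · exact (hl _ _).2 h
    · exact absurd h (hlr' _ _)
    · exact absurd h.symm (hlr' _ _)
    · exact (hr _ _).2 h
  have hsurj : Function.Surjective F := by
    intro w
    obtain ⟨e, rfl | rfl⟩ := hs' w
    · exact ⟨_, hFl e⟩
    · exact ⟨_, hFr e⟩
  refine ⟨⟨Equiv.ofBijective F ⟨hinj, hsurj⟩, ?_⟩⟩
  intro v w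
  change G'.Adj (F v) (F w) ↔ G.Adj v w
  rw [ha, ha']
  refine exists_congr fun e => ?_
  rw [← hFl, ← hFr, hinj.eq_iff, hinj.eq_iff, hinj.eq_iff, hinj.eq_iff]

theorem wb_data {α : Type*} (G : SimpleGraph α) (hb : G.Colorable 2) :
    ∃ l r : G.edgeSet → α, (∀ e, e.1 = s(l e, r e)) ∧ ∀ e f, l e ≠ r f := by
  obtain ⟨c⟩ := hb
  have : ∀ e : G.edgeSet, ∃ a b, e.1 = s(a, b) ∧ c a = 0 ∧ c b = 1 := by
    rintro ⟨e, he⟩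
    induction e using Sym2.ind with
    | _ a b =>
      have h := c.valid (G.mem_edgeSet.1 he)
      have h0 : c a = 0 ∧ c b = 1 ∨ c b = 0 ∧ c a = 1 := by omega
      rcases h0 with h0 | h0
      · exact ⟨a, b, rfl, h0⟩
      · exact ⟨b, a, Sym2.eq_swap, h0⟩
  choose l r h using this
  refine ⟨l, r, fun e => (h e).1, fun e f hh => ?_⟩
  have h1 := (h e).2.1
  have h2 := (h f).2.2
  rw [hh, h2] at h1
  exact absurd h1 (by decide)

theorem wb_adj {α : Type*} (G : SimpleGraph α) (l r : G.edgeSet → α)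
    (h : ∀ e, e.1 = s(l e, r e)) (v w : α) :
    G.Adj v w ↔ ∃ e, (v = l e ∧ w = r e) ∨ (v = r e ∧ w = l e) := by
  constructor
  · intro ha
    have := h ⟨s(v, w), ha⟩
    exact ⟨⟨s(v, w), ha⟩, by simpa using this⟩
  · rintro ⟨e, h1⟩
    rw [← G.mem_edgeSet]
    have : s(v, w) = e.1 := by rw [h e]; simpa using h1
    rw [this]; exact e.2

theorem wb_surj {α : Type*} (G : SimpleGraph α) (hc : G.Connected) (l r : G.edgeSet → α)
    (h : ∀ e, e.1 = s(l e, r e)) (hne : G.edgeSet.Nonempty) (v : α) :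
    ∃ e, v = l e ∨ v = r e := by
  obtain ⟨e, he⟩ := hne
  have hadj : G.Adj (l ⟨e, he⟩) (r ⟨e, he⟩) := (wb_adj G l r h _ _).2 ⟨_, Or.inl ⟨rfl, rfl⟩⟩
  have : Nontrivial α := ⟨_, _, hadj.ne⟩
  obtain ⟨w, hw⟩ := hc.preconnected.exists_adj_of_nontrivial v
  obtain ⟨f, hf⟩ := (wb_adj G l r h _ _).1 hw
  exact ⟨f, by tauto⟩

theorem wb_inj {α : Type*} (G : SimpleGraph α) (l r : G.edgeSet → α)
    (h : ∀ e, e.1 = s(l e, r e)) (e f : G.edgeSet) (h1 : l e = l f) (h2 : r e = r f) : e = f := by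
  apply Subtype.ext; rw [h, h, h1, h2]

theorem wb_line {α : Type*} (G : SimpleGraph α) (l r : G.edgeSet → α)
    (h : ∀ e, e.1 = s(l e, r e)) (hlr : ∀ e f, l e ≠ r f) (e f : G.edgeSet) :
    (l e = l f ∨ r e = r f) ↔ (e = f ∨ G.lineGraph.Adj e f) := by
  rw [SimpleGraph.lineGraph_adj_iff_exists, h e, h f]
  constructor
  · rintro (h1 | h1)
    · by_cases he : e = f
      · exact Or.inl he
      · exact Or.inr ⟨he, l e, by simp, by simp [h1]⟩
    · by_cases he : e = f
      · exact Or.inl he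
      · exact Or.inr ⟨he, r e, by simp, by simp [h1]⟩
  · rintro (rfl | ⟨_, v, h1, h2⟩)
    · exact Or.inl rfl
    · simp only [Sym2.mem_iff] at h1 h2
      grind

theorem wb_prop {α : Type*} (G : SimpleGraph α) (hc : G.Connected) (l r : G.edgeSet → α)
    (h : ∀ e, e.1 = s(l e, r e)) (P : G.edgeSet → Prop)
    (hP : ∀ e f, (l e = l f ∨ r e = r f) → P e → P f) (hlr : ∀ e f, l e ≠ r f)
    (e₀ : G.edgeSet) (h0 : P e₀) (f : G.edgeSet) : P f := by
  have key : ∀ v w : α, G.Walk v w → (∀ e, (v = l e ∨ v = r e) → P e) →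
      (∀ e, (w = l e ∨ w = r e) → P e) := by
    intro v w p
    induction p with
    | nil => exact id
    | cons hadj p ih =>
      intro h1
      apply ih
      obtain ⟨g, hg⟩ := (wb_adj G l r h _ _).1 hadj
      have hPg : P g := h1 g (by tauto)
      intro e he
      refine hP g e ?_ hPg
      grind
  obtain ⟨p⟩ := hc.preconnected (l e₀) (l f)
  refine key _ _ p ?_ f (Or.inl rfl)
  rintro e (he | he)
  · exact hP _ _ (Or.inl he) h0
  · exact absurd he (hlr _ _)

theorem wb_local {E α β : Type*} (l r : E → α) (l' r' : E → β)
    (hi : ∀ e f, l e = l f → r e = r f → e = f)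
    (hi' : ∀ e f, l' e = l' f → r' e = r' f → e = f)
    (hR : ∀ e f, (l e = l f ∨ r e = r f) ↔ (l' e = l' f ∨ r' e = r' f)) (e : E) :
    (∀ f, (l e = l f ↔ l' e = l' f) ∧ (r e = r f ↔ r' e = r' f)) ∨
    (∀ f, (l e = l f ↔ r' e = r' f) ∧ (r e = r f ↔ l' e = l' f)) := by
  by_cases hn : ∀ f, (l e = l f ∨ r e = r f) → e = f
  · left
    intro f
    have := hR e f
    have := hn f
    grind
  · push Not at hn
    obtain ⟨f, hf, hne⟩ := hn
    have hef := hi e f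
    have hef' := hi' e f
    have hR1 := hR e f
    by_cases hcase : (l e = l f ∧ l' e = l' f) ∨ (r e = r f ∧ r' e = r' f)
    · left
      intro g
      have := hR e g
      have := hR f g
      have := hi e g
      have := hi' e g
      have := hi f g
      have := hi' f g
      grind
    · right
      intro g
      have := hR e g
      have := hR f g
      have := hi e g
      have := hi' e g
      have := hi f g
      have := hi' f g
      grind

/-- **Theorem (Whitney's isomorphism theorem for bipartite graphs).**
If `G` and `G'` are connected bipartite simple graphs, each having at least one edge, and their
line graphs `L(G)` and `L(G')` are isomorphic, then `G` and `G'` are isomorphic; i.e. the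
exceptional pair (`K₃` and `K_{1,3}`) of Whitney's theorem never occurs when both graphs are
bipartite. -/
theorem whitney_bipartite {α β : Type*} (G : SimpleGraph α) (G' : SimpleGraph β)
    (hGconn : G.Connected) (hG'conn : G'.Connected)
    (hGbip : G.Colorable 2) (hG'bip : G'.Colorable 2)
    (hGe : G.edgeSet.Nonempty) (hG'e : G'.edgeSet.Nonempty)
    (hiso : Nonempty (G.lineGraph ≃g G'.lineGraph)) :
    Nonempty (G ≃g G') := by
  obtain ⟨φ⟩ := hiso
  obtain ⟨l, r, h, hlr⟩ := wb_data G hGbip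
  obtain ⟨l', r', h', hlr'⟩ := wb_data G' hG'bip
  have hi := wb_inj G l r h
  have hi' : ∀ e f, l' (φ e) = l' (φ f) → r' (φ e) = r' (φ f) → e = f :=
    fun e f h1 h2 => φ.injective (wb_inj G' l' r' h' _ _ h1 h2)
  have hR : ∀ e f, (l e = l f ∨ r e = r f) ↔
      (l' (φ e) = l' (φ f) ∨ r' (φ e) = r' (φ f)) := by
    intro e f
    rw [wb_line G l r h hlr, wb_line G' l' r' h' hlr', φ.map_adj_iff, φ.injective.eq_iff]
  have hloc := wb_local l r (fun e => l' (φ e)) (fun e => r' (φ e)) hi hi' hR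
  have hs := wb_surj G hGconn l r h hGe
  have hs' := wb_surj G' hG'conn l' r' h' hG'e
  have ha := wb_adj G l r h
  have ha' := wb_adj G' l' r' h'
  obtain ⟨e₀, he₀⟩ := hGe
  rcases hloc ⟨e₀, he₀⟩ with h0 | h0
  · have hall := wb_prop G hGconn l r h
      (fun e => ∀ f, (l e = l f ↔ l' (φ e) = l' (φ f)) ∧ (r e = r f ↔ r' (φ e) = r' (φ f)))
      (by
        intro e f hef hPe
        rcases hloc f with hf | hf
        · exact hf
        · have h1 := hPe f
          have h2 := hf e
          have h3 := hi' e f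
          have : e = f := by grind
          exact this ▸ hPe) hlr ⟨e₀, he₀⟩ h0
    refine wb_build G G' l r (fun e => l' (φ e)) (fun e => r' (φ e))
      (fun e f => (hall e f).1) (fun e f => (hall e f).2) hlr (fun e f => hlr' _ _) hs ?_ ha ?_
    · intro v
      obtain ⟨e, he⟩ := hs' v
      exact ⟨φ.symm e, by simpa using he⟩
    · intro v w
      rw [ha', ← φ.surjective.exists
        (p := fun e => (v = l' e ∧ w = r' e) ∨ (v = r' e ∧ w = l' e))]
  · have hall := wb_prop G hGconn l r h
      (fun e => ∀ f, (l e = l f ↔ r' (φ e) = r' (φ f)) ∧ (r e = r f ↔ l' (φ e) = l' (φ f)))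
      (by
        intro e f hef hPe
        rcases hloc f with hf | hf
        · have h1 := hPe f
          have h2 := hf e
          have h3 := hi' e f
          have : e = f := by grind
          exact this ▸ hPe
        · exact hf) hlr ⟨e₀, he₀⟩ h0
    refine wb_build G G' l r (fun e => r' (φ e)) (fun e => l' (φ e))
      (fun e f => (hall e f).1) (fun e f => (hall e f).2) hlr (fun e f => (hlr' _ _).symm) hs ?_ ha ?_
    · intro v
      obtain ⟨e, he⟩ := hs' v
      exact ⟨φ.symm e, by simpa using he.symm⟩
    · intro v w
      rw [ha', ← φ.surjective.exists
        (p := fun e => (v = r' e ∧ w = l' e) ∨ (v = l' e ∧ w = r' e))]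
      exact exists_congr fun e => or_comm
end

section
/- For any hypergraph G_H, the number of edges of its line expansion satisfies |E_l| = Σ_{v∈V} d(v)(d(v)−1)/2 + Σ_{e∈E} δ(e)(δ(e)−1)/2. -/
open Finset

section

variable {V E : Type*} [Fintype V] [Fintype E] [DecidableEq V] [DecidableEq E]
  (h : V → E → Prop) [∀ v e, Decidable (h v e)]

/-- The line expansion of a hypergraph `(V, E, h)`: the simple graph whose vertices are the
incident vertex–hyperedge pairs, two distinct pairs being adjacent iff they share the vertex
or the hyperedge. -/
def lineExpansion : SimpleGraph {p : V × E // h p.1 p.2} where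
  Adj p q := p ≠ q ∧ (p.1.1 = q.1.1 ∨ p.1.2 = q.1.2)
  symm := by
    refine ⟨?_⟩
    rintro p q ⟨hne, hor⟩
    exact ⟨hne.symm, hor.imp Eq.symm Eq.symm⟩
  loopless := by
    refine ⟨?_⟩
    rintro p ⟨hne, -⟩
    exact hne rfl

instance : DecidableRel (lineExpansion h).Adj := fun p q =>
  inferInstanceAs (Decidable (p ≠ q ∧ (p.1.1 = q.1.1 ∨ p.1.2 = q.1.2)))

theorem le_sum_aux (f : V → E → ℕ) :
    ∑ p : {p : V × E // h p.1 p.2}, f p.1.1 p.1.2 = ∑ v, ∑ e, if h v e then f v e else 0 := by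
  rw [← Finset.sum_subtype (Finset.univ.filter fun p : V × E => h p.1 p.2) (by simp)
    (fun p : V × E => f p.1 p.2), Finset.sum_filter, Fintype.sum_prod_type]

theorem le_degree_aux
    (d : V → ℕ) (hd : ∀ v, d v = ∑ e, if h v e then 1 else 0)
    (δ : E → ℕ) (hδ : ∀ e, δ e = ∑ v, if h v e then 1 else 0)
    (p : {p : V × E // h p.1 p.2}) :
    (lineExpansion h).degree p = (d p.1.1 - 1) + (δ p.1.2 - 1) := by
  have e1 : (Finset.univ.filter fun q : {p : V × E // h p.1 p.2} => q.1.1 = p.1.1).card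
      = d p.1.1 := by
    rw [Finset.card_filter, le_sum_aux h (fun v _ => if v = p.1.1 then 1 else 0), hd,
      Finset.sum_eq_single p.1.1]
    · simp
    · intro b _ hb
      simp [hb]
    · simp
  have e2 : (Finset.univ.filter fun q : {p : V × E // h p.1 p.2} => q.1.2 = p.1.2).card
      = δ p.1.2 := by
    rw [Finset.card_filter, le_sum_aux h (fun _ e => if e = p.1.2 then 1 else 0), hδ,
      Finset.sum_comm, Finset.sum_eq_single p.1.2]
    · simp
    · intro b _ hb
      simp [hb]
    · simp
  have e3 : (lineExpansion h).neighborFinset p =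
      ((Finset.univ.filter fun q : {p : V × E // h p.1 p.2} => q.1.1 = p.1.1).erase p) ∪
      ((Finset.univ.filter fun q : {p : V × E // h p.1 p.2} => q.1.2 = p.1.2).erase p) := by
    ext q
    rw [SimpleGraph.mem_neighborFinset]
    change (p ≠ q ∧ (p.1.1 = q.1.1 ∨ p.1.2 = q.1.2)) ↔ _
    simp only [Finset.mem_union,
      Finset.mem_erase, Finset.mem_filter, Finset.mem_univ, true_and]
    grind
  rw [← SimpleGraph.card_neighborFinset_eq_degree, e3, Finset.card_union_of_disjoint,
    Finset.card_erase_of_mem (by simp), Finset.card_erase_of_mem (by simp), e1, e2]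
  rw [Finset.disjoint_left]
  intro q h1 h2
  simp only [Finset.mem_erase, Finset.mem_filter, Finset.mem_univ, true_and] at h1 h2
  exact h1.1 (Subtype.ext (Prod.ext h1.2 h2.2))

/-- **Theorem.** The number of edges of the line expansion of a hypergraph satisfies
`|E_l| = Σ_v d(v)(d(v)−1)/2 + Σ_e δ(e)(δ(e)−1)/2`. -/
theorem card_lineExpansion_edges
    (d : V → ℕ) (hd : ∀ v, d v = ∑ e, if h v e then 1 else 0)
    (δ : E → ℕ) (hδ : ∀ e, δ e = ∑ v, if h v e then 1 else 0) :
    (lineExpansion h).edgeFinset.card =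
      ∑ v, d v * (d v - 1) / 2 + ∑ e, δ e * (δ e - 1) / 2 := by
  have key := (lineExpansion h).sum_degrees_eq_twice_card_edges
  simp only [le_degree_aux h d hd δ hδ] at key
  rw [Finset.sum_add_distrib, le_sum_aux h (fun v _ => d v - 1),
    le_sum_aux h (fun _ e => δ e - 1), Finset.sum_comm (f := fun v e => if h v e then δ e - 1 else 0)] at key
  have k1 : ∀ v, (∑ e, if h v e then d v - 1 else 0) = 2 * (d v * (d v - 1) / 2) := by
    intro v
    rw [Nat.mul_div_cancel' (Nat.even_mul_pred_self _).two_dvd]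
    conv_rhs => rw [hd v, Finset.sum_mul]
    simp [hd v]
  have k2 : ∀ e, (∑ v, if h v e then δ e - 1 else 0) = 2 * (δ e * (δ e - 1) / 2) := by
    intro e
    rw [Nat.mul_div_cancel' (Nat.even_mul_pred_self _).two_dvd]
    conv_rhs => rw [hδ e, Finset.sum_mul]
    simp [hδ e]
  simp only [k1, k2, ← Finset.mul_sum] at key
  omega

end
end

section
/- Let G_H be a hypergraph in which every vertex lies in at least one hyperedge, let w_v, w_e > 0, let B be the V_l × V_l matrix with B((v,e),(v',e')) = w_e if v = v' and e ≠ e', B((v,e),(v',e')) = w_v if e = e' and v ≠ v', and 0 otherwise, and let D be the V_l × V_l diagonal matrix with D((v,e),(v,e)) = w_e d(v) + w_v δ(e). Then for all distinct vertices u, u' ∈ V, the vertex-level propagation matrix obtained by projecting, propagating, and back-projecting satisfies (P_v' D⁻¹ B P_v)(u,u') = [ Σ_{e∈E} w_v h(u,e) h(u',e) / ( δ(e) · (w_v δ(e) + w_e d(u)) ) ] / [ Σ_{e∈E} h(u,e) / δ(e) ]. -/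
open Finset Matrix

section

variable {V E : Type*} [Fintype V] [Fintype E] [DecidableEq V] [DecidableEq E]
  (h : V → E → Prop) [∀ v e, Decidable (h v e)]

/-- The line nodes of the line expansion: incident vertex–hyperedge pairs. -/
abbrev LineNode := {p : V × E // h p.1 p.2}

/-- The vertex degree `d(v) = Σ_e h(v,e)`. -/
def vdeg (v : V) : ℕ := ∑ e, if h v e then 1 else 0

/-- The hyperedge degree `δ(e) = Σ_v h(v,e)`. -/
def edeg (e : E) : ℕ := ∑ v, if h v e then 1 else 0

/-- The vertex projection matrix `P_v`, with `P_v((v,e), u) = 1` iff `u = v`. -/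
def projV : Matrix (LineNode h) V ℝ := fun p u => if p.1.1 = u then 1 else 0

/-- The vertex back-projection matrix `P_v'`, with
`P_v'(u, (v,e)) = (1/δ(e)) / (Σ_{e' : h(u,e')=1} 1/δ(e'))` if `u = v`, and `0` otherwise. -/
noncomputable def backProjV : Matrix V (LineNode h) ℝ := fun u p =>
  if p.1.1 = u then
    ((edeg h p.1.2 : ℝ))⁻¹ / (∑ e', if h u e' then ((edeg h e' : ℝ))⁻¹ else 0)
  else 0

theorem sum_lineNode (f : V → E → ℝ) :
    ∑ p : LineNode h, f p.1.1 p.1.2 = ∑ v, ∑ e, if h v e then f v e else 0 := by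
  rw [← Fintype.sum_prod_type' (f := fun v e => if h v e then f v e else 0)]
  rw [← Finset.sum_filter]
  exact (Finset.sum_subtype (Finset.univ.filter fun p : V × E => h p.1 p.2)
    (by simp) (fun p : V × E => f p.1 p.2)).symm

/-- **Theorem.** Let `G_H` be a hypergraph in which every vertex lies in at least one hyperedge,
let `w_v, w_e > 0`, let `B` be the line-node matrix with `B((v,e),(v',e')) = w_e` if `v = v'` and
`e ≠ e'`, `w_v` if `e = e'` and `v ≠ v'`, and `0` otherwise, and let `D` be the diagonal matrix
with `D((v,e),(v,e)) = w_e d(v) + w_v δ(e)`.  Then for all distinct `u, u' ∈ V`, the vertex-level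
propagation matrix satisfies
`(P_v' D⁻¹ B P_v)(u,u') = [Σ_e w_v h(u,e) h(u',e) / (δ(e)(w_v δ(e) + w_e d(u)))] / [Σ_e h(u,e)/δ(e)]`. -/
theorem vertex_level_propagation
    (w_v w_e : ℝ) (hwv : 0 < w_v) (hwe : 0 < w_e)
    (hV : ∀ v, ∃ e, h v e)
    (B : Matrix (LineNode h) (LineNode h) ℝ)
    (hB : ∀ p q : LineNode h, B p q =
      if p.1.1 = q.1.1 ∧ p.1.2 ≠ q.1.2 then w_e
      else if p.1.2 = q.1.2 ∧ p.1.1 ≠ q.1.1 then w_v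
      else 0)
    (D : Matrix (LineNode h) (LineNode h) ℝ)
    (hD : D = Matrix.diagonal fun p : LineNode h =>
      w_e * (vdeg h p.1.1 : ℝ) + w_v * (edeg h p.1.2 : ℝ))
    (u u' : V) (huu' : u ≠ u') :
    (backProjV h * D⁻¹ * B * projV h) u u' =
      (∑ e, w_v * (if h u e then (1 : ℝ) else 0) * (if h u' e then (1 : ℝ) else 0) /
          ((edeg h e : ℝ) * (w_v * (edeg h e : ℝ) + w_e * (vdeg h u : ℝ)))) /
        (∑ e, (if h u e then (1 : ℝ) else 0) / (edeg h e : ℝ)) := by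
  have hpos : ∀ p : LineNode h,
      w_e * (vdeg h p.1.1 : ℝ) + w_v * (edeg h p.1.2 : ℝ) ≠ 0 := by
    intro p
    have h1 : 0 < vdeg h p.1.1 := by
      unfold vdeg
      exact Finset.sum_pos' (fun _ _ => Nat.zero_le _) ⟨p.1.2, Finset.mem_univ _, by simp [p.2]⟩
    have h1' : (0 : ℝ) < vdeg h p.1.1 := by exact_mod_cast h1
    positivity
  have hDi : D⁻¹ = Matrix.diagonal fun p : LineNode h =>
      (w_e * (vdeg h p.1.1 : ℝ) + w_v * (edeg h p.1.2 : ℝ))⁻¹ := by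
    apply Matrix.inv_eq_right_inv
    rw [hD, Matrix.diagonal_mul_diagonal, ← Matrix.diagonal_one]
    congr 1
    funext p
    exact mul_inv_cancel₀ (hpos p)
  have hS : (∑ e, (if h u e then (1 : ℝ) else 0) / (edeg h e : ℝ)) =
      ∑ e', if h u e' then ((edeg h e' : ℝ))⁻¹ else 0 := by
    refine Finset.sum_congr rfl fun e _ => ?_
    split_ifs <;> simp
  rw [hS, hDi, Matrix.mul_assoc, Matrix.mul_apply]
  simp only [Matrix.mul_diagonal]
  have hBP : ∀ p : LineNode h, p.1.1 = u →
      (B * projV h) p u' = if h u' p.1.2 then w_v else 0 := by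
    intro p hp
    rw [Matrix.mul_apply]
    simp only [hB, projV]
    rw [sum_lineNode h (fun v e => (if p.1.1 = v ∧ p.1.2 ≠ e then w_e
      else if p.1.2 = e ∧ p.1.1 ≠ v then w_v else 0) * (if v = u' then 1 else 0))]
    rw [Finset.sum_eq_single u' (by intro b _ hb; simp [hb]) (by simp)]
    rw [Finset.sum_eq_single p.1.2 (by intro b _ hb; simp [hp, huu', hb.symm]) (by simp)]
    simp [hp, huu']
  trans ∑ p : LineNode h, (fun v e => if v = u then ((edeg h e : ℝ))⁻¹ /
      (∑ e', if h u e' then ((edeg h e' : ℝ))⁻¹ else 0) *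
      (w_e * (vdeg h u : ℝ) + w_v * (edeg h e : ℝ))⁻¹ * (if h u' e then w_v else 0) else 0)
      p.1.1 p.1.2
  · refine Finset.sum_congr rfl fun p _ => ?_
    by_cases hp : p.1.1 = u
    · rw [hBP p hp]; simp [backProjV, hp]
    · simp [backProjV, hp]
  refine (sum_lineNode h (fun v e => if v = u then ((edeg h e : ℝ))⁻¹ /
      (∑ e', if h u e' then ((edeg h e' : ℝ))⁻¹ else 0) *
      (w_e * (vdeg h u : ℝ) + w_v * (edeg h e : ℝ))⁻¹ * (if h u' e then w_v else 0) else 0)).trans ?_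
  rw [Finset.sum_eq_single u (by intro b _ hb; simp [hb]) (by simp), Finset.sum_div]
  refine Finset.sum_congr rfl fun e _ => ?_
  rw [add_comm (w_v * _)]
  by_cases h1 : h u e <;> by_cases h2 : h u' e <;> simp [h1, h2]
  simp only [div_eq_mul_inv, mul_inv]
  ring

end
end
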